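/- arXiv:1703.06983 — 2 statements merged into one kernel-verified Lean document; each statement's English description precedes it below -/
import Mathlib

section
/- Let M' be an acyclic matching on X' and let j ∈ {1, …, n+1} be an index such that no arc of the form (σ ∪ {w_j} → σ) with σ ∈ X belongs to M'. Define M = { (σ → τ) : σ, τ ∈ X and (σ ∪ {w_j} → τ ∪ {w_j}) ∈ M' }. Then M is an acyclic matching on X. -/
open Finset

/-- A (finite) simplicial complex: a finite collection of nonempty finite sets
    of vertices, closed under taking nonempty subsets. -/
def IsComplex {U : Type*} [DecidableEq U] (X : Finset (Finset U)) : Prop :=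
  (∀ σ ∈ X, σ ≠ ∅) ∧ ∀ σ ∈ X, ∀ τ : Finset U, τ ⊆ σ → τ ≠ ∅ → τ ∈ X

/-- Arc of the Hasse diagram `H(X)`: from `σ` to `τ` iff `τ ⊂ σ` and
    `dim σ = dim τ + 1` (i.e. `|σ| = |τ| + 1`). -/
def HasseArc {U : Type*} [DecidableEq U] (X : Finset (Finset U)) (σ τ : Finset U) : Prop :=
  σ ∈ X ∧ τ ∈ X ∧ τ ⊂ σ ∧ σ.card = τ.card + 1

/-- A matching on `X`: a set of arcs of `H(X)` such that every simplex of `X`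
    belongs to at most one arc. -/
def IsMatching {U : Type*} [DecidableEq U] (X : Finset (Finset U))
    (M : Set (Finset U × Finset U)) : Prop :=
  (∀ p ∈ M, HasseArc X p.1 p.2) ∧
  ∀ p ∈ M, ∀ q ∈ M, p ≠ q → p.1 ≠ q.1 ∧ p.1 ≠ q.2 ∧ p.2 ≠ q.1 ∧ p.2 ≠ q.2

/-- Arc of the modified Hasse diagram `H(X)^M`, obtained from `H(X)` by
    reversing the direction of each arc in `M`. -/
def ModArc {U : Type*} [DecidableEq U] (X : Finset (Finset U))
    (M : Set (Finset U × Finset U)) (a b : Finset U) : Prop :=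
  (HasseArc X a b ∧ (a, b) ∉ M) ∨ (b, a) ∈ M

/-- An acyclic matching: a matching such that `H(X)^M` has no directed cycle. -/
def IsAcyclicMatching {U : Type*} [DecidableEq U] (X : Finset (Finset U))
    (M : Set (Finset U × Finset U)) : Prop :=
  IsMatching X M ∧ ∀ a : Finset U, ¬ Relation.TransGen (ModArc X M) a a

/-- `σ` is a critical simplex of the matching `M` on `X`: it belongs to no arc of `M`. -/
def IsCritical {U : Type*} [DecidableEq U] (X : Finset (Finset U))
    (M : Set (Finset U × Finset U)) (σ : Finset U) : Prop :=
  σ ∈ X ∧ ∀ p ∈ M, p.1 ≠ σ ∧ p.2 ≠ σ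

/-- `X` has dimension exactly `d` (the dimension of a simplex `σ` is `|σ| - 1`). -/
def HasDim {U : Type*} [DecidableEq U] (X : Finset (Finset U)) (d : ℕ) : Prop :=
  (∀ σ ∈ X, σ.card ≤ d + 1) ∧ ∃ σ ∈ X, σ.card = d + 1

/-- The complex `X' = X ∪ { σ ∪ {wᵢ} : σ ∈ X ∪ {∅}, i = 1, …, n+1 }`, obtained
    from `X` by attaching `n+1` cones with apexes `w 0, …, w n`. -/
def coneCx {U : Type*} [DecidableEq U] (X : Finset (Finset U)) (n : ℕ)
    (w : Fin (n + 1) → U) : Finset (Finset U) :=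
  X ∪ Finset.univ.biUnion (fun i : Fin (n + 1) =>
    (insert (∅ : Finset U) X).image (fun σ => insert (w i) σ))

/-- The matching `M = { (σ → τ) : σ, τ ∈ X and (σ ∪ {w_j} → τ ∪ {w_j}) ∈ M' }`. -/
def pullMatch {U : Type*} [DecidableEq U] (X : Finset (Finset U))
    (M' : Set (Finset U × Finset U)) (wj : U) : Set (Finset U × Finset U) :=
  {p | p.1 ∈ X ∧ p.2 ∈ X ∧ (insert wj p.1, insert wj p.2) ∈ M'}

/-!
Adjoining `w j` to each simplex embeds `H(X)` into `H(X')` as an induced subgraph, and `M` is the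
restriction of `M'` along this embedding. Distinct arcs of `M` therefore remain disjoint, and a
directed cycle of `H(X)^M` would be carried to a directed cycle of `H(X')^M'`.
-/

section Comap

variable {U V : Type*} [DecidableEq U] [DecidableEq V]
  {X : Finset (Finset U)} {Y : Finset (Finset V)} {M : Set (Finset V × Finset V)}
  {f : Finset U → Finset V}

/-- The pullback to `X` of a set of arcs `M` along a map `f` of simplices. Only the values of `f`
on `X` matter, and `pullMatch X M v` is the case `f = insert v`. -/
def comapMatching (X : Finset (Finset U)) (f : Finset U → Finset V)
    (M : Set (Finset V × Finset V)) : Set (Finset U × Finset U) :=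
  {p | p.1 ∈ X ∧ p.2 ∈ X ∧ (f p.1, f p.2) ∈ M}

theorem IsMatching.comap (hM : IsMatching Y M) (hinj : Set.InjOn f X)
    (harc : ∀ σ ∈ X, ∀ τ ∈ X, HasseArc Y (f σ) (f τ) → HasseArc X σ τ) :
    IsMatching X (comapMatching X f M) := by
  refine ⟨fun p ⟨hσ, hτ, hp⟩ ↦ harc _ hσ _ hτ (hM.1 _ hp), ?_⟩
  intro p ⟨hp₁, hp₂, hp⟩ q ⟨hq₁, hq₂, hq⟩ hpq
  have hne : (f p.1, f p.2) ≠ (f q.1, f q.2) := fun h ↦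
    hpq (Prod.ext (hinj hp₁ hq₁ (Prod.mk.inj h).1) (hinj hp₂ hq₂ (Prod.mk.inj h).2))
  obtain ⟨h₁₁, h₁₂, h₂₁, h₂₂⟩ := hM.2 _ hp _ hq hne
  exact ⟨ne_of_apply_ne f h₁₁, ne_of_apply_ne f h₁₂, ne_of_apply_ne f h₂₁, ne_of_apply_ne f h₂₂⟩

theorem ModArc.map_of_comapMatching
    (harc : ∀ σ τ, HasseArc X σ τ → HasseArc Y (f σ) (f τ)) {σ τ : Finset U}
    (h : ModArc X (comapMatching X f M) σ τ) : ModArc Y M (f σ) (f τ) := by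
  rcases h with ⟨hστ, hnot⟩ | ⟨-, -, hτσ⟩
  · exact Or.inl ⟨harc σ τ hστ, fun hmem ↦ hnot ⟨hστ.1, hστ.2.1, hmem⟩⟩
  · exact Or.inr hτσ

theorem IsAcyclicMatching.comap (hM : IsAcyclicMatching Y M) (hinj : Set.InjOn f X)
    (harc : ∀ σ ∈ X, ∀ τ ∈ X, HasseArc Y (f σ) (f τ) ↔ HasseArc X σ τ) :
    IsAcyclicMatching X (comapMatching X f M) := by
  refine ⟨hM.1.comap hinj fun σ hσ τ hτ ↦ (harc σ hσ τ hτ).1, fun σ hcycle ↦ hM.2 (f σ) ?_⟩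
  have harc_map (σ τ : Finset U) (h : HasseArc X σ τ) : HasseArc Y (f σ) (f τ) :=
    (harc σ h.1 τ h.2.1).2 h
  exact hcycle.lift f fun _ _ ↦ ModArc.map_of_comapMatching harc_map

end Comap

section Insert

variable {U : Type*} [DecidableEq U] {X Y : Finset (Finset U)} {v : U}

theorem insert_ssubset_insert_iff_of_notMem {σ τ : Finset U} (hσ : v ∉ σ) (hτ : v ∉ τ) :
    insert v τ ⊂ insert v σ ↔ τ ⊂ σ := by
  simp only [ssubset_def, insert_subset_insert_iff hσ, insert_subset_insert_iff hτ]

theorem hasseArc_insert_iff (hv : ∀ σ ∈ X, v ∉ σ) (hY : ∀ σ ∈ X, insert v σ ∈ Y)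
    {σ τ : Finset U} (hσ : σ ∈ X) (hτ : τ ∈ X) :
    HasseArc Y (insert v σ) (insert v τ) ↔ HasseArc X σ τ := by
  simp only [HasseArc, hY σ hσ, hY τ hτ, hσ, hτ, true_and,
    insert_ssubset_insert_iff_of_notMem (hv σ hσ) (hv τ hτ),
    card_insert_of_notMem (hv σ hσ), card_insert_of_notMem (hv τ hτ), add_left_inj]

theorem insert_mem_coneCx {n : ℕ} (w : Fin (n + 1) → U) (i : Fin (n + 1)) {σ : Finset U}
    (hσ : σ ∈ X) : insert (w i) σ ∈ coneCx X n w :=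
  mem_union_right _ <| mem_biUnion.2
    ⟨i, mem_univ i, mem_image_of_mem _ (mem_insert_of_mem hσ)⟩

theorem pullMatch_isAcyclicMatching_general {M : Set (Finset U × Finset U)}
    (hM : IsAcyclicMatching Y M) (hv : ∀ σ ∈ X, v ∉ σ) (hY : ∀ σ ∈ X, insert v σ ∈ Y) :
    IsAcyclicMatching X (pullMatch X M v) :=
  hM.comap (insert_erase_invOn.2.injOn.mono hv) fun _ hσ _ hτ ↦ hasseArc_insert_iff hv hY hσ hτ

end Insert

/-- `M` is an acyclic matching on `X`. -/
theorem pullMatch_isAcyclicMatching {U : Type*} [DecidableEq U] (d n : ℕ)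
    (X : Finset (Finset U)) (hX : IsComplex X) (hd : HasDim X d)
    (hn : X.card = n) (hn1 : 1 ≤ n)
    (w : Fin (n + 1) → U) (hw : Function.Injective w)
    (hwX : ∀ i : Fin (n + 1), ∀ σ ∈ X, w i ∉ σ)
    (M' : Set (Finset U × Finset U)) (hM' : IsAcyclicMatching (coneCx X n w) M')
    (j : Fin (n + 1)) (hj : ∀ σ ∈ X, (insert (w j) σ, σ) ∉ M') :
    IsAcyclicMatching X (pullMatch X M' (w j)) := by
  exact pullMatch_isAcyclicMatching_general hM' (hwX j) fun _ hσ ↦ insert_mem_coneCx w j hσ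
end

section
/- Let M' be a matching on X' and let j ∈ {1, …, n+1} be an index such that no arc of the form (σ ∪ {w_j} → σ) with σ ∈ X belongs to M'. Define M = { (σ → τ) : σ, τ ∈ X and (σ ∪ {w_j} → τ ∪ {w_j}) ∈ M' }. Then the set of critical simplices of M is exactly { σ ∈ X : σ ∪ {w_j} is a critical simplex of M', or (σ ∪ {w_j} → {w_j}) ∈ M' }. In particular, if every critical simplex of M' has dimension ≤ k+1, then every critical simplex of M has dimension ≤ k. -/
open Finset

/-!
Among the simplices of `X'`, those containing `w_j` are `{w_j}` and the `σ ∪ {w_j}` with `σ ∈ X`: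
that is, `X` is the link of `w_j` in `X'`. An arc at `σ ∪ {w_j}` can therefore only remove `w_j`
(excluded by hypothesis), join `σ ∪ {w_j}` to `{w_j}`, or correspond to an arc of `X` at `σ`.
The same argument works at any vertex, with its link in place of `X`.
-/

section

variable {U : Type*} [DecidableEq U]

/-- The link of the vertex `v` in `Y`: the nonempty `σ` with `v ∉ σ` and `σ ∪ {v} ∈ Y`. The empty
set is left out because complexes here consist of nonempty simplices. -/
def link (Y : Finset (Finset U)) (v : U) : Finset (Finset U) :=
  (Y.memberSubfamily v).erase ∅

section Link

variable {Y : Finset (Finset U)} {v : U} {σ ρ : Finset U}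

theorem mem_link : σ ∈ link Y v ↔ σ ≠ ∅ ∧ insert v σ ∈ Y ∧ v ∉ σ := by
  rw [link, mem_erase, mem_memberSubfamily]

theorem insert_mem_of_mem_link (hσ : σ ∈ link Y v) : insert v σ ∈ Y :=
  (mem_link.1 hσ).2.1

theorem notMem_of_mem_link (hσ : σ ∈ link Y v) : v ∉ σ :=
  (mem_link.1 hσ).2.2

theorem insert_ne_singleton_of_mem_link (hσ : σ ∈ link Y v) : insert v σ ≠ {v} := by
  obtain ⟨hσ_ne, -, hvσ⟩ := mem_link.1 hσ
  intro h
  rw [← erase_insert hvσ, h, erase_singleton] at hσ_ne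
  exact hσ_ne rfl

theorem eq_singleton_or_exists_mem_link (hρ : ρ ∈ Y) (hvρ : v ∈ ρ) :
    ρ = {v} ∨ ∃ σ ∈ link Y v, insert v σ = ρ := by
  refine or_iff_not_imp_left.2 fun hρ_ne ↦ ⟨ρ.erase v, mem_link.2 ⟨?_, ?_, ?_⟩, insert_erase hvρ⟩
  · rw [Ne, erase_eq_empty_iff]
    exact not_or.2 ⟨ne_empty_of_mem hvρ, hρ_ne⟩
  · rwa [insert_erase hvρ]
  · exact notMem_erase v ρ

end Link

section Cone

variable {X : Finset (Finset U)} {n : ℕ} {w : Fin (n + 1) → U}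

theorem mem_coneCx {ρ : Finset U} :
    ρ ∈ coneCx X n w ↔ ρ ∈ X ∨ ∃ i, ∃ σ ∈ insert ∅ X, insert (w i) σ = ρ := by
  simp only [coneCx, mem_union, mem_biUnion, mem_univ, true_and, mem_image]

theorem link_coneCx {j : Fin (n + 1)} (hX : ∅ ∉ X) (hwX : ∀ σ ∈ X, w j ∉ σ) :
    link (coneCx X n w) (w j) = X := by
  ext σ
  rw [mem_link, mem_coneCx]
  constructor
  · rintro ⟨hσ_ne, hσX | ⟨i, τ, hτ, hτσ⟩, hwσ⟩
    · exact absurd (mem_insert_self _ _) (hwX _ hσX)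
    · have hwτ : w j ∉ τ := by
        rcases mem_insert.1 hτ with rfl | hτX
        exacts [notMem_empty _, hwX τ hτX]
      have hij : w j = w i :=
        (mem_insert.1 (hτσ ▸ mem_insert_self (w j) σ)).resolve_right hwτ
      have hτ_eq : τ = σ := by
        rw [← erase_insert hwτ, ← erase_insert hwσ, ← hτσ, hij]
      subst hτ_eq
      exact (mem_insert.1 hτ).resolve_left hσ_ne
  · intro hσ
    exact ⟨ne_of_mem_of_not_mem hσ hX, .inr ⟨j, σ, mem_insert_of_mem hσ, rfl⟩, hwX σ hσ⟩

end Cone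

theorem HasseArc.eq_erase {Y : Finset (Finset U)} {ρ τ : Finset U} {v : U}
    (h : HasseArc Y ρ τ) (hvρ : v ∈ ρ) (hvτ : v ∉ τ) : τ = ρ.erase v := by
  obtain ⟨-, -, hτρ, hcard⟩ := h
  refine eq_of_subset_of_card_le (subset_erase.2 ⟨hτρ.subset, hvτ⟩) ?_
  rw [card_erase_of_mem hvρ, hcard, Nat.add_sub_cancel]

section PullMatch

variable {X Y : Finset (Finset U)} {M : Set (Finset U × Finset U)} {v : U} {σ : Finset U}

theorem isCritical_pullMatch_of_insert (hσ : σ ∈ X) (h : IsCritical Y M (insert v σ)) :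
    IsCritical X (pullMatch X M v) σ :=
  ⟨hσ, fun _ ⟨_, _, hp⟩ ↦
    ⟨fun hp₁ ↦ (h.2 _ hp).1 (congrArg (insert v) hp₁),
      fun hp₂ ↦ (h.2 _ hp).2 (congrArg (insert v) hp₂)⟩⟩

theorem IsMatching.isCritical_pullMatch_of_arc_to_apex (hM : IsMatching Y M)
    (hσ : σ ∈ link Y v) (h : (insert v σ, {v}) ∈ M) :
    IsCritical (link Y v) (pullMatch (link Y v) M v) σ := by
  refine ⟨hσ, fun ⟨α, β⟩ ⟨_, hβ, hαβ⟩ ↦ ?_⟩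
  have hne : (insert v α, insert v β) ≠ (insert v σ, {v}) :=
    fun heq ↦ insert_ne_singleton_of_mem_link hβ (congrArg Prod.snd heq)
  obtain ⟨hα_ne, -, hβ_ne, -⟩ := hM.2 _ hαβ _ h hne
  exact ⟨fun hασ ↦ hα_ne (congrArg (insert v) hασ), fun hβσ ↦ hβ_ne (congrArg (insert v) hβσ)⟩

theorem IsCritical.insert_of_pullMatch (hM : ∀ p ∈ M, HasseArc Y p.1 p.2)
    (hσ : IsCritical (link Y v) (pullMatch (link Y v) M v) σ)
    (hσM : (insert v σ, σ) ∉ M) (hvM : (insert v σ, {v}) ∉ M) :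
    IsCritical Y M (insert v σ) := by
  obtain ⟨hσ_link, hσ_unmatched⟩ := hσ
  refine ⟨insert_mem_of_mem_link hσ_link, fun ⟨ρ, τ⟩ hρτ ↦ ⟨?_, ?_⟩⟩
  · rintro rfl
    have harc : HasseArc Y (insert v σ) τ := hM _ hρτ
    by_cases hvτ : v ∈ τ
    · rcases eq_singleton_or_exists_mem_link harc.2.1 hvτ with rfl | ⟨β, hβ, rfl⟩
      · exact hvM hρτ
      · exact (hσ_unmatched (σ, β) ⟨hσ_link, hβ, hρτ⟩).1 rfl
    · have hτσ : τ = σ := by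
        rw [harc.eq_erase (mem_insert_self v σ) hvτ, erase_insert (notMem_of_mem_link hσ_link)]
      exact hσM (hτσ ▸ hρτ)
  · rintro rfl
    obtain ⟨hρ, -, hssub, -⟩ : HasseArc Y ρ (insert v σ) := hM _ hρτ
    rcases eq_singleton_or_exists_mem_link hρ (hssub.subset (mem_insert_self v σ)) with
      rfl | ⟨α, hα, rfl⟩
    · exact insert_ne_empty v σ (ssubset_singleton_iff.1 hssub)
    · exact (hσ_unmatched (α, σ) ⟨hα, hσ_link, hρτ⟩).2 rfl

theorem IsMatching.isCritical_pullMatch_link_iff (hM : IsMatching Y M)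
    (hv : ∀ σ ∈ link Y v, (insert v σ, σ) ∉ M) :
    IsCritical (link Y v) (pullMatch (link Y v) M v) σ ↔
      σ ∈ link Y v ∧ (IsCritical Y M (insert v σ) ∨ (insert v σ, {v}) ∈ M) := by
  constructor
  · intro hσ
    exact ⟨hσ.1, or_iff_not_imp_right.2 (hσ.insert_of_pullMatch hM.1 (hv σ hσ.1))⟩
  · rintro ⟨hσ, hcrit | harc⟩
    exacts [isCritical_pullMatch_of_insert hσ hcrit, hM.isCritical_pullMatch_of_arc_to_apex hσ harc]

end PullMatch

theorem pullMatch_critical_general (k : ℕ) {Y : Finset (Finset U)}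
    {M : Set (Finset U × Finset U)} (hM : IsMatching Y M) {v : U}
    (hv : ∀ σ ∈ link Y v, (insert v σ, σ) ∉ M) :
    (∀ σ, IsCritical (link Y v) (pullMatch (link Y v) M v) σ ↔
      (σ ∈ link Y v ∧ (IsCritical Y M (insert v σ) ∨ (insert v σ, {v}) ∈ M))) ∧
    ((∀ ρ, IsCritical Y M ρ → ρ.card ≤ k + 2) →
      ∀ σ, IsCritical (link Y v) (pullMatch (link Y v) M v) σ → σ.card ≤ k + 1) := by
  refine ⟨fun σ ↦ hM.isCritical_pullMatch_link_iff hv, fun hk σ hσ ↦ ?_⟩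
  obtain ⟨hσ_link, hσ_or⟩ := (hM.isCritical_pullMatch_link_iff hv).1 hσ
  have hcard : (insert v σ).card = σ.card + 1 :=
    card_insert_of_notMem (notMem_of_mem_link hσ_link)
  rcases hσ_or with hcrit | harc
  · have := hk _ hcrit
    omega
  · have hsingleton : (insert v σ).card = ({v} : Finset U).card + 1 := (hM.1 _ harc).2.2.2
    rw [card_singleton] at hsingleton
    omega

end

/-- the critical simplices of `M` are exactly the `σ ∈ X` such that
    `σ ∪ {w_j}` is critical for `M'` or `(σ ∪ {w_j} → {w_j}) ∈ M'`; in particular, if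
    all critical simplices of `M'` have dimension ≤ k+1, then all critical simplices
    of `M` have dimension ≤ k. -/
theorem pullMatch_critical {U : Type*} [DecidableEq U] (d k n : ℕ)
    (X : Finset (Finset U)) (hX : IsComplex X) (hd : HasDim X d)
    (hn : X.card = n) (hn1 : 1 ≤ n)
    (w : Fin (n + 1) → U) (hw : Function.Injective w)
    (hwX : ∀ i : Fin (n + 1), ∀ σ ∈ X, w i ∉ σ)
    (M' : Set (Finset U × Finset U)) (hM' : IsMatching (coneCx X n w) M')
    (j : Fin (n + 1)) (hj : ∀ σ ∈ X, (insert (w j) σ, σ) ∉ M') :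
    (∀ σ : Finset U, IsCritical X (pullMatch X M' (w j)) σ ↔
      (σ ∈ X ∧ (IsCritical (coneCx X n w) M' (insert (w j) σ) ∨
        (insert (w j) σ, ({w j} : Finset U)) ∈ M'))) ∧
    ((∀ ρ, IsCritical (coneCx X n w) M' ρ → ρ.card ≤ k + 2) →
      ∀ σ, IsCritical X (pullMatch X M' (w j)) σ → σ.card ≤ k + 1) := by
  have hlink : link (coneCx X n w) (w j) = X := link_coneCx (fun h ↦ hX.1 ∅ h rfl) (hwX j)
  simpa only [hlink] using pullMatch_critical_general k hM' (v := w j) (hlink.symm ▸ hj)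
end
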